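/- arXiv:1111.2743 — 2 statements merged into one kernel-verified Lean document; each statement's English description precedes it below -/
import Mathlib

section
/- Wigner semicircle law for the diagonal of the GUE kernel: for every ε > 0 there is a constant C (depending only on ε) such that for all integers n ≥ 1 and all real x with |x| ≤ (√2 − ε)·√n, the diagonal value Kₙ(x,x) = e^{−x²}/(2ⁿ·(n−1)!·√π) · ( Hₙ'(x)·H_{n−1}(x) − H_{n−1}'(x)·Hₙ(x) ) satisfies | Kₙ(x,x) − (√(2n)/π)·√(1 − x²/(2n)) | ≤ (C/n) · (√(2n)/π)·√(1 − x²/(2n)). -/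
open Real

lemma aux_growth (a b : ℝ → ℝ) (N d x : ℝ) (hN : 0 < N) (hd : 0 < d)
    (ha : ∀ t, HasDerivAt a (N * b t - t * a t) t)
    (hb : ∀ t, HasDerivAt b (t * b t - N * a t) t)
    (hx0 : 0 ≤ x) (hx : x ≤ (1 - d) * N) :
    a x ^ 2 + b x ^ 2 ≤ (a 0 ^ 2 + b 0 ^ 2) * (Real.exp (1 / d) / d) := by
  set K : ℝ → ℝ := fun t => N ^ 2 / 2 * (a t ^ 2 + b t ^ 2) - N * t * (a t * b t) with hK
  have hK' : ∀ t, HasDerivAt K (-(N * (a t * b t))) t := by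
    intro t
    have h1 := ((((ha t).pow 2).add ((hb t).pow 2)).const_mul (N ^ 2 / 2)).sub
      (((hasDerivAt_id t).const_mul N).mul ((ha t).mul (hb t)))
    convert! h1 using 1
    simp
    ring
  have hab : ∀ t, |a t * b t| ≤ (a t ^ 2 + b t ^ 2) / 2 := by
    intro t
    rw [abs_le]
    constructor <;> nlinarith [sq_nonneg (a t + b t), sq_nonneg (a t - b t)]
  have hKlow : ∀ t, 0 ≤ t → t ≤ (1 - d) * N →
      d * (N ^ 2 / 2 * (a t ^ 2 + b t ^ 2)) ≤ K t := by
    intro t ht0 ht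
    have h1 := (abs_le.1 (hab t)).2
    have h2 : N * t * (a t * b t) ≤ N * ((1 - d) * N) * ((a t ^ 2 + b t ^ 2) / 2) := by
      calc N * t * (a t * b t) ≤ N * t * ((a t ^ 2 + b t ^ 2) / 2) := by gcongr
        _ ≤ _ := by gcongr
    simp only [hK]
    nlinarith
  have hg := norm_le_gronwallBound_of_norm_deriv_right_le (f := K)
    (f' := fun t => -(N * (a t * b t))) (δ := K 0) (K := 1 / (d * N)) (ε := 0) (a := 0) (b := x)
    (fun t _ => (hK' t).continuousAt.continuousWithinAt)
    (fun t _ => (hK' t).hasDerivWithinAt)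
    (by
      rw [Real.norm_eq_abs, abs_of_nonneg]
      simp only [hK]; simp; positivity)
    (by
      intro t ht
      have h1 := hKlow t ht.1 (ht.2.le.trans hx)
      rw [Real.norm_eq_abs, Real.norm_eq_abs, abs_neg, abs_mul, abs_of_pos hN, add_zero]
      calc N * |a t * b t| ≤ N * ((a t ^ 2 + b t ^ 2) / 2) := by gcongr; exact hab t
        _ = 1 / (d * N) * (d * (N ^ 2 / 2 * (a t ^ 2 + b t ^ 2))) := by field_simp
        _ ≤ 1 / (d * N) * |K t| := by gcongr; exact h1.trans (le_abs_self _))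
    x ⟨hx0, le_rfl⟩
  rw [gronwallBound_ε0, sub_zero] at hg
  have h3 := hKlow x hx0 hx
  have h4 : 1 / (d * N) * x ≤ 1 / d := by
    rw [one_div_mul_eq_div, div_le_div_iff₀ (by positivity) hd]
    nlinarith [mul_pos hd hN, mul_pos (mul_pos hd hN) hd]
  have hK0 : K 0 = N ^ 2 / 2 * (a 0 ^ 2 + b 0 ^ 2) := by simp [hK]
  have h5 : d * (N ^ 2 / 2 * (a x ^ 2 + b x ^ 2))
      ≤ N ^ 2 / 2 * (a 0 ^ 2 + b 0 ^ 2) * Real.exp (1 / d) := by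
    rw [← hK0]
    refine (h3.trans ((le_abs_self _).trans hg)).trans ?_
    have : 0 ≤ K 0 := by rw [hK0]; positivity
    gcongr
  rw [← mul_div_assoc, le_div_iff₀ hd]
  have h6 : 0 < N ^ 2 / 2 := by positivity
  refine le_of_mul_le_mul_left ?_ h6
  nlinarith

lemma aux_main (a b : ℝ → ℝ) (N d x : ℝ) (hN : 0 < N) (hd : 0 < d) (hd1 : d ≤ 1)
    (ha : ∀ t, HasDerivAt a (N * b t - t * a t) t)
    (hb : ∀ t, HasDerivAt b (t * b t - N * a t) t)
    (hx0 : 0 ≤ x) (hx : x ≤ (1 - d) * N) :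
    |(N ^ 2 / 2 * (a x ^ 2 + b x ^ 2) - N * x * (a x * b x)) / √(N ^ 2 - x ^ 2)
      - N / 2 * (a 0 ^ 2 + b 0 ^ 2)|
      ≤ (5 / 4 * (Real.exp (1 / d) / d) / d ^ 5) * ((a 0 ^ 2 + b 0 ^ 2) / N) := by
  set M := Real.exp (1 / d) / d with hM
  set S := a 0 ^ 2 + b 0 ^ 2 with hS
  have hMp : 0 < M := by positivity
  have hS0 : 0 ≤ S := by positivity
  have hbd : ∀ t ∈ Set.Icc 0 x, a t ^ 2 + b t ^ 2 ≤ S * M := fun t ht =>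
    aux_growth a b N d t hN hd ha hb ht.1 (ht.2.trans hx)
  set w : ℝ → ℝ := fun t => √(N ^ 2 - t ^ 2) with hw
  have hwlow : ∀ t ∈ Set.Icc 0 x, d * N ≤ w t := by
    intro t ht
    apply Real.le_sqrt_of_sq_le
    have h1 : t ≤ (1 - d) * N := ht.2.trans hx
    have h2 : t ^ 2 ≤ ((1 - d) * N) ^ 2 := by gcongr; exact ht.1
    have h3 : 0 ≤ d * (1 - d) * N ^ 2 := by
      have : 0 ≤ 1 - d := by linarith
      positivity
    nlinarith
  have hdN : 0 < d * N := by positivity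
  have hwp : ∀ t ∈ Set.Icc 0 x, 0 < w t := fun t ht => hdN.trans_le (hwlow t ht)
  have hw2 : ∀ t ∈ Set.Icc 0 x, w t ^ 2 = N ^ 2 - t ^ 2 := fun t ht =>
    Real.sq_sqrt (Real.sqrt_pos.1 (hwp t ht)).le
  have hw' : ∀ t ∈ Set.Icc 0 x, HasDerivAt w (-t / w t) t := by
    intro t ht
    have h0 := Real.sqrt_pos.1 (hwp t ht)
    have h1 := (((hasDerivAt_id t).pow 2).const_sub (N ^ 2)).sqrt (by simpa using h0.ne')
    convert! h1 using 1
    simp [hw]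
    ring
  set E : ℝ → ℝ := fun t => N ^ 2 / 4 * (a t ^ 2 - b t ^ 2) / w t ^ 3 with hE
  set J : ℝ → ℝ := fun t =>
    (N ^ 2 / 2 * (a t ^ 2 + b t ^ 2) - N * t * (a t * b t)) / w t with hJ
  have hG' : ∀ t ∈ Set.Icc 0 x, HasDerivAt (fun t => J t + E t)
      (3 * t * N ^ 2 / 4 * (a t ^ 2 - b t ^ 2) / w t ^ 5) t := by
    intro t ht
    have hne := (hwp t ht).ne'
    have hK' : HasDerivAt (fun t => N ^ 2 / 2 * (a t ^ 2 + b t ^ 2) - N * t * (a t * b t))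
        (-(N * (a t * b t))) t := by
      have h1 := ((((ha t).pow 2).add ((hb t).pow 2)).const_mul (N ^ 2 / 2)).sub
        (((hasDerivAt_id t).const_mul N).mul ((ha t).mul (hb t)))
      convert! h1 using 1
      simp
      ring
    have hD : HasDerivAt (fun t => N ^ 2 / 4 * (a t ^ 2 - b t ^ 2))
        (N ^ 2 / 4 * (4 * N * (a t * b t) - 2 * t * (a t ^ 2 + b t ^ 2))) t := by
      have h1 := ((((ha t).pow 2).sub ((hb t).pow 2)).const_mul (N ^ 2 / 4))
      convert! h1 using 1
      simp
      left
      ring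
    have h2 := (hK'.div (hw' t ht) hne).add (hD.div ((hw' t ht).pow 3) (pow_ne_zero 3 hne))
    convert! h2 using 1
    have hNt : N ^ 2 = w t ^ 2 + t ^ 2 := by rw [hw2 t ht]; ring
    simp only [Pi.pow_apply]
    field_simp
    have : w t ^ 4 = w t ^ 2 * w t ^ 2 := by ring
    simp only [this, hw2 t ht]
    push_cast
    ring
  have hdiff : ∀ t, |a t ^ 2 - b t ^ 2| ≤ a t ^ 2 + b t ^ 2 := by
    intro t
    rw [abs_le]
    constructor <;> nlinarith [sq_nonneg (a t), sq_nonneg (b t)]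
  have hGb : ∀ t ∈ Set.Icc 0 x, ‖3 * t * N ^ 2 / 4 * (a t ^ 2 - b t ^ 2) / w t ^ 5‖
      ≤ 3 / 4 * M / d ^ 5 * (S / N ^ 2) := by
    intro t ht
    have h1 : t ≤ N := by nlinarith [ht.2]
    have h0 : 0 ≤ t := ht.1
    have hwt := hwp t ht
    rw [Real.norm_eq_abs, abs_div, abs_mul, abs_of_nonneg (by positivity : 0 ≤ 3 * t * N ^ 2 / 4),
      abs_of_pos (by positivity : 0 < w t ^ 5)]
    calc 3 * t * N ^ 2 / 4 * |a t ^ 2 - b t ^ 2| / w t ^ 5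
        ≤ 3 * N * N ^ 2 / 4 * (S * M) / (d * N) ^ 5 := by
          gcongr
          · exact (hdiff t).trans (hbd t ht)
          · exact hwlow t ht
      _ = _ := by field_simp
  have hEb : ∀ t ∈ Set.Icc 0 x, |E t| ≤ 1 / 4 * M / d ^ 3 * (S / N) := by
    intro t ht
    have hwt := hwp t ht
    simp only [hE]
    rw [abs_div, abs_mul, abs_of_nonneg (by positivity : 0 ≤ N ^ 2 / 4),
      abs_of_pos (by positivity : 0 < w t ^ 3)]
    calc N ^ 2 / 4 * |a t ^ 2 - b t ^ 2| / w t ^ 3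
        ≤ N ^ 2 / 4 * (S * M) / (d * N) ^ 3 := by
          gcongr
          · exact (hdiff t).trans (hbd t ht)
          · exact hwlow t ht
      _ = _ := by field_simp
  have hmv := (convex_Icc (0 : ℝ) x).norm_image_sub_le_of_norm_hasDerivWithin_le
    (fun t ht => (hG' t ht).hasDerivWithinAt) hGb
    (Set.left_mem_Icc.2 hx0) (Set.right_mem_Icc.2 hx0)
  have hJ0 : J 0 = N / 2 * S := by
    simp only [hJ, hw]
    have : √(N ^ 2 - 0 ^ 2) = N := by
      rw [show N ^ 2 - 0 ^ 2 = N ^ 2 by ring, Real.sqrt_sq hN.le]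
    rw [this]
    simp only [← hS]
    field_simp
    ring
  have h3 := hEb 0 (Set.left_mem_Icc.2 hx0)
  have h4 := hEb x (Set.right_mem_Icc.2 hx0)
  have hxN : x ≤ N := by nlinarith
  have h5 : |J x + E x - (J 0 + E 0)| ≤ 3 / 4 * M / d ^ 5 * (S / N) := by
    refine hmv.trans ?_
    rw [sub_zero, Real.norm_eq_abs, abs_of_nonneg hx0]
    calc _ ≤ 3 / 4 * M / d ^ 5 * (S / N ^ 2) * N := by gcongr
      _ = _ := by field_simp
  have h6 : 1 / 4 * M / d ^ 3 * (S / N) ≤ 1 / 4 * M / d ^ 5 * (S / N) := by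
    have : d ^ 5 ≤ d ^ 3 := pow_le_pow_of_le_one hd.le hd1 (by norm_num)
    gcongr
  change |J x - N / 2 * S| ≤ _
  rw [← hJ0]
  have e : 5 / 4 * M / d ^ 5 * (S / N) = 3 / 4 * M / d ^ 5 * (S / N)
    + 1 / 4 * M / d ^ 5 * (S / N) + 1 / 4 * M / d ^ 5 * (S / N) := by ring
  rw [e]
  rw [abs_le] at *
  constructor <;> linarith [h3.1, h3.2, h4.1, h4.2, h5.1, h5.2]

/-- Two-sided version. -/
lemma aux_main_two (a b : ℝ → ℝ) (N d x : ℝ) (hN : 0 < N) (hd : 0 < d) (hd1 : d ≤ 1)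
    (ha : ∀ t, HasDerivAt a (N * b t - t * a t) t)
    (hb : ∀ t, HasDerivAt b (t * b t - N * a t) t)
    (hx : |x| ≤ (1 - d) * N) :
    |(N ^ 2 / 2 * (a x ^ 2 + b x ^ 2) - N * x * (a x * b x)) / √(N ^ 2 - x ^ 2)
      - N / 2 * (a 0 ^ 2 + b 0 ^ 2)|
      ≤ (5 / 4 * (Real.exp (1 / d) / d) / d ^ 5) * ((a 0 ^ 2 + b 0 ^ 2) / N) := by
  rcases le_total 0 x with h | h
  · exact aux_main a b N d x hN hd hd1 ha hb h (by rwa [abs_of_nonneg h] at hx)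
  · have := aux_main (fun t => a (-t)) (fun t => - b (-t)) N d (-x) hN hd hd1
      (fun t => by
        have h1 := (ha (-t)).comp t (hasDerivAt_neg t)
        convert! h1 using 1
        ring)
      (fun t => by
        have h1 := ((hb (-t)).comp t (hasDerivAt_neg t)).neg
        convert! h1 using 1
        ring)
      (by linarith) (by rwa [abs_of_nonpos h] at hx)
    simp only [neg_neg, neg_zero, neg_sq] at this
    convert this using 4
    ring

lemma hermite_deriv_succ (n : ℕ) : Polynomial.derivative (Polynomial.hermite (n + 1))
    = ((n : Polynomial ℤ) + 1) * Polynomial.hermite n := by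
  induction n with
  | zero => simp
  | succ k ih =>
    rw [Polynomial.hermite_succ (k + 1), ih]
    simp only [Polynomial.derivative_sub, Polynomial.derivative_mul, Polynomial.derivative_X]
    rw [ih]
    have h2 := Polynomial.hermite_succ k
    have h3 : Polynomial.derivative ((k : Polynomial ℤ) + 1) = 0 := by simp
    rw [h3, h2]
    push_cast
    ring

/-- value of the Hermite polynomial at a real number -/
noncomputable def hval (n : ℕ) (x : ℝ) : ℝ := Polynomial.aeval x (Polynomial.hermite n)

lemma hval_hasDerivAt (n : ℕ) (x : ℝ) :
    HasDerivAt (hval (n + 1)) ((n + 1) * hval n x) x := by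
  have h := (Polynomial.hermite (n + 1)).hasDerivAt_aeval x
  rw [hermite_deriv_succ] at h
  convert! h using 1
  simp [hval]

lemma hval_hasDerivAt' (n : ℕ) (x : ℝ) :
    HasDerivAt (hval n) (x * hval n x - hval (n + 1) x) x := by
  have h := (Polynomial.hermite n).hasDerivAt_aeval x
  convert! h using 1
  simp [hval, Polynomial.hermite_succ]

lemma hval_rec (n : ℕ) (x : ℝ) : hval (n + 2) x = x * hval (n + 1) x - (n + 1) * hval n x := by
  have := (hval_hasDerivAt n x).unique (hval_hasDerivAt' (n + 1) x)
  linarith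

lemma hval_zero (k : ℕ) : hval (2 * k + 1) 0 = 0 ∧
    Real.Wallis.W k * (2 * k + 1) * (hval (2 * k) 0) ^ 4 = ((2 * k).factorial : ℝ) ^ 2 := by
  induction k with
  | zero => simp [hval, Real.Wallis.W]
  | succ k ih =>
    have h1 := hval_rec (2 * k + 1) 0
    have h2 := hval_rec (2 * k) 0
    have e1 : 2 * (k + 1) + 1 = 2 * k + 1 + 2 := by ring
    have e2 : 2 * (k + 1) = 2 * k + 2 := by ring
    refine ⟨by rw [e1, h1, ih.1]; simp, ?_⟩
    rw [e2, h2, Real.Wallis.W_succ]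
    have e3 : (2 * k + 2).factorial = (2 * k + 2) * ((2 * k + 1) * (2 * k).factorial) := by
      rw [Nat.factorial_succ, Nat.factorial_succ]
    rw [e3]
    push_cast
    have e4 : ((2 * k + 2) * ((2 * k + 1) * ((2 * k).factorial : ℝ))) ^ 2
      = ((2 * k + 2) * (2 * k + 1)) ^ 2 * ((2 * k).factorial : ℝ) ^ 2 := by ring
    rw [e4, ← ih.2]
    have : (2 * (k:ℝ) + 1) ≠ 0 := by positivity
    have : (2 * (k:ℝ) + 3) ≠ 0 := by positivity
    field_simp
    ring

/-- With `S = He_{m+1}(0)^2 + (m+1) He_m(0)^2`. -/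
lemma S_bound (m : ℕ) (T : ℝ)
    (hT : T = ((hval (m + 1) 0) ^ 2 + (m + 1) * hval m 0 ^ 2) / ((m + 1).factorial : ℝ)) :
    |π / 2 * (m + 1) * T ^ 2 - 1| ≤ 1 / ((m : ℝ) + 1) := by
  rcases Nat.even_or_odd' m with ⟨k, rfl | rfl⟩
  · obtain ⟨h1, h2⟩ := hval_zero k
    have hf : ((2 * k).factorial : ℝ) ≠ 0 := by positivity
    have hT2 : T = hval (2 * k) 0 ^ 2 / ((2 * k).factorial : ℝ) := by
      rw [hT, h1, Nat.factorial_succ]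
      push_cast
      have : (2 * (k:ℝ) + 1) ≠ 0 := by positivity
      field_simp
      ring
    have hW := Real.Wallis.W_pos k
    have hT3 : Real.Wallis.W k * (2 * k + 1) * T ^ 2 = 1 := by
      rw [hT2, div_pow, ← pow_mul, ← mul_div_assoc, h2]
      field_simp
    have hl := Real.Wallis.le_W k
    have hu := Real.Wallis.W_le k
    push_cast
    have hp : 0 < 2 * (k : ℝ) + 1 := by positivity
    have hX : 0 ≤ (2 * (k:ℝ) + 1) * T ^ 2 := by positivity
    have hl2 : π / 2 * (2 * k + 1) ≤ Real.Wallis.W k * (2 * k + 2) := by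
      have := mul_le_mul_of_nonneg_right hl (by positivity : (0:ℝ) ≤ 2 * k + 2)
      have e : (2 * (k:ℝ) + 1) / (2 * k + 2) * (π / 2) * (2 * k + 2) = π / 2 * (2 * k + 1) := by
        have : (2 * (k:ℝ) + 2) ≠ 0 := by positivity
        field_simp
      linarith
    have A := mul_le_mul_of_nonneg_right hu hX
    have B := mul_le_mul_of_nonneg_right hl2 (by positivity : 0 ≤ T ^ 2)
    rw [abs_le]
    constructor
    · have : 0 ≤ 1 / (2 * (k:ℝ) + 1) := by positivity
      linarith
    · rw [le_div_iff₀ hp]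
      nlinarith
  · obtain ⟨h1, h2⟩ := hval_zero (k + 1)
    obtain ⟨h1', -⟩ := hval_zero k
    have e1 : 2 * k + 1 + 1 = 2 * (k + 1) := by ring
    have hf : ((2 * (k + 1)).factorial : ℝ) ≠ 0 := by positivity
    have hT2 : T = hval (2 * (k + 1)) 0 ^ 2 / ((2 * (k + 1)).factorial : ℝ) := by
      rw [hT, h1', e1]
      simp
    have hW := Real.Wallis.W_pos (k + 1)
    have hT3 : Real.Wallis.W (k + 1) * (2 * (k + 1 : ℕ) + 1) * T ^ 2 = 1 := by
      rw [hT2, div_pow, ← pow_mul, ← mul_div_assoc, h2]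
      field_simp
    have hl := Real.Wallis.le_W (k + 1)
    have hu := Real.Wallis.W_le (k + 1)
    push_cast at *
    set q : ℝ := (k : ℝ) + 1 with hq
    have hqp : 0 < q := by positivity
    have e5 : 2 * (k : ℝ) + 1 + 1 = 2 * q := by rw [hq]; ring
    rw [e5]
    have hX : 0 ≤ T ^ 2 := by positivity
    have hl2 : π / 2 * (2 * q + 1) ≤ Real.Wallis.W (k + 1) * (2 * q + 2) := by
      have := mul_le_mul_of_nonneg_right hl (by positivity : (0:ℝ) ≤ 2 * q + 2)
      have e : (2 * q + 1) / (2 * q + 2) * (π / 2) * (2 * q + 2) = π / 2 * (2 * q + 1) := by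
        field_simp
      linarith
    have A := mul_le_mul_of_nonneg_right hu hX
    have B := mul_le_mul_of_nonneg_right hl2 hX
    have hp : 0 < 2 * q + 1 := by positivity
    rw [abs_le]
    constructor
    · rw [neg_le_sub_iff_le_add]
      have h7 : 1 - 1 / (2 * q) ≤ 2 * q / (2 * q + 1) := by
        rw [sub_le_iff_le_add, div_add_div _ _ hp.ne' (by positivity), one_le_div (by positivity)]
        nlinarith
      have h8 : 2 * q / (2 * q + 1) ≤ π / 2 * (2 * q) * T ^ 2 := by
        rw [div_le_iff₀ hp]
        have A2 := mul_le_mul_of_nonneg_left A (by positivity : 0 ≤ 2 * q * (2 * q + 1))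
        linear_combination A2 - 2 * q * hT3
      linarith
    · have h9 : 0 ≤ 1 / (2 * q) := by positivity
      have h10 : π / 2 * (2 * q) * T ^ 2 ≤ 1 := by
        have : 2 * q * (π / 2 * (2 * q + 1) * T ^ 2) ≤ 2 * q * (Real.Wallis.W (k + 1) * (2 * q + 2) * T ^ 2) := by gcongr
        have h11 : (2 * q + 1) * (2 * q * (Real.Wallis.W (k + 1) * (2 * q + 2) * T ^ 2)) = 2 * q * (2 * q + 2) := by
          linear_combination (2 * q * (2 * q + 2)) * hT3
        have h12 : (2 * q + 1) ^ 2 * (π / 2 * (2 * q) * T ^ 2) ≤ (2 * q + 1) ^ 2 * 1 := by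
          have := mul_le_mul_of_nonneg_left this hp.le
          rw [h11] at this
          nlinarith
        exact le_of_mul_le_mul_left h12 (by positivity)
      linarith

lemma aux_combine (n A Kd K w N S D F : ℝ) (hn : 0 < n) (hn1 : 1 ≤ n) (hA : 0 ≤ A) (hw : 0 < w)
    (hN : 0 < N) (hN2 : N ^ 2 = 2 * n) (hF : 0 < F) (hD : D = F * √π) (hS : 0 ≤ S)
    (hKd : Kd = K / D)
    (h1 : |K / w - N / 2 * S| ≤ A * (S / N))
    (h2 : |π / 2 * n * (S / F) ^ 2 - 1| ≤ 1 / n) :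
    |Kd - w / π| ≤ (2 * A + 1) / n * (w / π) := by
  have hpi := Real.pi_pos
  have hsp : 0 < √π := Real.sqrt_pos.2 hpi
  have hsp2 : √π ^ 2 = π := Real.sq_sqrt hpi.le
  have hDp : 0 < D := by rw [hD]; positivity
  set y := π * (N / 2 * S / D) with hy
  have hy0 : 0 ≤ y := by positivity
  have hy2 : y ^ 2 = π / 2 * n * (S / F) ^ 2 := by
    have e : y = √π * N / 2 * (S / F) := by
      rw [hy, hD]
      nth_rewrite 1 [← hsp2]
      field_simp
    rw [e]
    calc (√π * N / 2 * (S / F)) ^ 2 = √π ^ 2 * N ^ 2 / 4 * (S / F) ^ 2 := by ring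
      _ = _ := by rw [hsp2, hN2]; ring
  rw [← hy2] at h2
  have h3 : |y - 1| ≤ 1 / n := by
    refine le_trans ?_ h2
    rw [show y ^ 2 - 1 = (y - 1) * (y + 1) by ring, abs_mul, abs_of_pos (by linarith : 0 < y + 1)]
    nlinarith [abs_nonneg (y - 1)]
  have h4 : y ≤ 2 := by
    have : 1 / n ≤ 1 := by rw [div_le_one hn]; exact hn1
    linarith [(abs_le.1 h3).2]
  have h5 : |π * Kd / w - y| ≤ 2 * A / n := by
    have e1 : π * Kd / w - y = π / D * (K / w - N / 2 * S) := by
      rw [hy, hKd]; field_simp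
    rw [e1, abs_mul, abs_of_pos (by positivity)]
    calc π / D * |K / w - N / 2 * S| ≤ π / D * (A * (S / N)) := by gcongr
      _ = A * y * 2 / N ^ 2 := by rw [hy]; field_simp
      _ = A * y / n := by rw [hN2]; field_simp
      _ ≤ A * 2 / n := by gcongr
      _ = _ := by ring
  have h6 : |π * Kd / w - 1| ≤ (2 * A + 1) / n := by
    calc |π * Kd / w - 1| = |(π * Kd / w - y) + (y - 1)| := by ring_nf
      _ ≤ |π * Kd / w - y| + |y - 1| := abs_add_le _ _
      _ ≤ 2 * A / n + 1 / n := add_le_add h5 h3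
      _ = _ := by ring
  have e2 : Kd - w / π = (π * Kd / w - 1) * (w / π) := by field_simp
  rw [e2, abs_mul, abs_of_pos (by positivity : 0 < w / π)]
  gcongr

/-- **Wigner semicircle law for the diagonal of the GUE kernel.**  Let `H m` be the
`m`-th physicists' Hermite polynomial.  For every `ε > 0` there is `C` such that for all
`n ≥ 1` and all `x` with `|x| ≤ (√2 - ε)√n`, the diagonal kernel value
`K n (x,x) = e^{-x²}/(2ⁿ (n-1)! √π) · (Hₙ'(x) H_{n-1}(x) - H_{n-1}'(x) Hₙ(x))`
satisfies `|K n (x,x) - (√(2n)/π)√(1 - x²/(2n))| ≤ (C/n)(√(2n)/π)√(1 - x²/(2n))`. -/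
theorem wigner_semicircle_GUE_kernel_diagonal
    (H : ℕ → ℝ → ℝ)
    (hH : ∀ m x, H m x = (2 : ℝ) ^ ((m : ℝ) / 2) *
      Polynomial.aeval (x * Real.sqrt 2) (Polynomial.hermite m))
    (ε : ℝ) (hε : 0 < ε) :
    ∃ C : ℝ, ∀ n : ℕ, 1 ≤ n → ∀ x : ℝ,
      |x| ≤ (Real.sqrt 2 - ε) * Real.sqrt n →
      ∀ Kdiag : ℝ,
      Kdiag = Real.exp (-x ^ 2) / (2 ^ n * ((n - 1).factorial : ℝ) * Real.sqrt π) *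
        (deriv (H n) x * H (n - 1) x - deriv (H (n - 1)) x * H n x) →
      |Kdiag - Real.sqrt (2 * n) / π * Real.sqrt (1 - x ^ 2 / (2 * n))| ≤
        C / n * (Real.sqrt (2 * n) / π * Real.sqrt (1 - x ^ 2 / (2 * n))) := by
  set d := ε / √2 with hd
  have h2p : 0 < √2 := by positivity
  have h22 : √2 * √2 = 2 := Real.mul_self_sqrt (by norm_num)
  have hdp : 0 < d := by positivity
  refine ⟨2 * (5 / 4 * (Real.exp (1 / d) / d) / d ^ 5) + 1, ?_⟩
  intro n hn x hx Kd hKd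
  obtain ⟨m, rfl⟩ : ∃ m, n = m + 1 := ⟨n - 1, by omega⟩
  simp only [Nat.add_sub_cancel] at hKd
  push_cast at hx ⊢
  set n : ℝ := (m : ℝ) + 1 with hnm
  have hnp : 0 < n := by positivity
  have hn1 : 1 ≤ n := by simp [hnm]
  set N := √(2 * n) with hN
  have hNp : 0 < N := by positivity
  have hN2 : N ^ 2 = 2 * n := Real.sq_sqrt (by positivity)
  have hNs : N = √2 * √n := Real.sqrt_mul (by norm_num) _
  have hsn : √n * √n = n := Real.mul_self_sqrt hnp.le
  have hsnp : 0 < √n := by positivity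
  have hx' : |x| ≤ (1 - d) * N := by
    have e : (1 - d) * N = (√2 - ε) * √n := by rw [hNs, hd]; field_simp
    rwa [e]
  have hd1 : d ≤ 1 := by
    by_contra! h
    have := abs_nonneg x
    nlinarith
  have hwpos : 0 < N ^ 2 - x ^ 2 := by
    have h1 : |x| < N := by nlinarith
    have := sq_lt_sq' (by linarith [neg_abs_le x, abs_nonneg x]) (lt_of_le_of_lt (le_abs_self x) h1)
    linarith
  have hw : N * √(1 - x ^ 2 / (2 * n)) = √(N ^ 2 - x ^ 2) := by
    rw [hN, ← Real.sqrt_mul (by positivity), ← hN, hN2]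
    congr 1
    field_simp
  have e : N / π * √(1 - x ^ 2 / (2 * n)) = √(N ^ 2 - x ^ 2) / π := by
    rw [← hw]; ring
  rw [e]
  set a : ℝ → ℝ := fun t => Real.exp (-t ^ 2 / 2) * hval (m + 1) (t * √2) with ha
  set b : ℝ → ℝ := fun t => Real.exp (-t ^ 2 / 2) * (√n * hval m (t * √2)) with hb
  have hE : ∀ t : ℝ, HasDerivAt (fun t : ℝ => Real.exp (-t ^ 2 / 2))
      (Real.exp (-t ^ 2 / 2) * (-t)) t := by
    intro t
    have h1 := ((((hasDerivAt_id t).pow 2).neg).div_const 2).exp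
    convert! h1 using 1
    simp
    ring
  have hs : ∀ t : ℝ, HasDerivAt (fun t : ℝ => t * √2) (√2) t := by
    intro t
    simpa using (hasDerivAt_id t).mul_const (√2)
  have hA1 : ∀ t : ℝ, HasDerivAt (fun t => hval (m + 1) (t * √2)) (n * hval m (t * √2) * √2) t :=
    fun t => HasDerivAt.comp (h₂ := hval (m + 1)) t (hval_hasDerivAt m (t * √2)) (hs t)
  have hB1 : ∀ t : ℝ, HasDerivAt (fun t => hval m (t * √2))
      ((t * √2 * hval m (t * √2) - hval (m + 1) (t * √2)) * √2) t :=
    fun t => HasDerivAt.comp (h₂ := hval m) t (hval_hasDerivAt' m (t * √2)) (hs t)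
  have ha' : ∀ t, HasDerivAt a (N * b t - t * a t) t := by
    intro t
    have h1 := (hE t).mul (hA1 t)
    convert! h1 using 1
    simp only [ha, hb, hNs]
    linear_combination (√2 * Real.exp (-t ^ 2 / 2) * hval m (t * √2)) * hsn
  have hb' : ∀ t, HasDerivAt b (t * b t - N * a t) t := by
    intro t
    have h1 := (hE t).mul ((hB1 t).const_mul (√n))
    convert! h1 using 1
    simp only [ha, hb, hNs]
    linear_combination (-√n * t * Real.exp (-t ^ 2 / 2) * hval m (t * √2)) * h22
  have hmain := aux_main_two a b N d x hNp hdp hd1 ha' hb' hx'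
  have ha0 : a 0 = hval (m + 1) 0 := by simp [ha]
  have hb0 : b 0 ^ 2 = n * hval m 0 ^ 2 := by
    simp only [hb]
    simp
    rw [mul_pow, Real.sq_sqrt hnp.le]
  have hSb := S_bound m _ rfl
  rw [← hnm, ← ha0, ← hb0] at hSb
  have hHd : ∀ k, H k = fun t => (2 : ℝ) ^ ((k : ℝ) / 2) * hval k (t * √2) := by
    intro k
    funext t
    exact hH k t
  have hd1' : deriv (H (m + 1)) x
      = (2 : ℝ) ^ (((m + 1 : ℕ) : ℝ) / 2) * (n * hval m (x * √2) * √2) := by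
    rw [hHd]
    exact ((hA1 x).const_mul _).deriv
  have hd2' : deriv (H m) x = (2 : ℝ) ^ ((m : ℝ) / 2) *
      ((x * √2 * hval m (x * √2) - hval (m + 1) (x * √2)) * √2) := by
    rw [hHd]
    exact ((hB1 x).const_mul _).deriv
  have hpow : (2 : ℝ) ^ (((m + 1 : ℕ) : ℝ) / 2) * (2 : ℝ) ^ ((m : ℝ) / 2) * √2 = 2 ^ (m + 1) := by
    rw [Real.sqrt_eq_rpow, ← Real.rpow_add (by norm_num), ← Real.rpow_add (by norm_num),
      ← Real.rpow_natCast]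
    congr 1
    push_cast
    ring
  have hexp : Real.exp (-x ^ 2) = Real.exp (-x ^ 2 / 2) ^ 2 := by
    rw [← Real.exp_nat_mul]
    congr 1
    push_cast
    ring
  have hfac : ((m + 1).factorial : ℝ) = n * (m.factorial : ℝ) := by
    rw [Nat.factorial_succ]; push_cast; rfl
  refine aux_combine n _ Kd (N ^ 2 / 2 * (a x ^ 2 + b x ^ 2) - N * x * (a x * b x))
    _ N (a 0 ^ 2 + b 0 ^ 2) (((m + 1).factorial : ℝ) * √π) ((m + 1).factorial : ℝ)
    hnp hn1 (by positivity) (Real.sqrt_pos.2 hwpos) hNp hN2 (by positivity) rfl (by positivity)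
    ?_ hmain hSb
  rw [hKd, hd1', hd2', hHd, hHd, hexp, hfac]
  have hsp : 0 < √π := Real.sqrt_pos.2 Real.pi_pos
  have hmf : (0 : ℝ) < (m.factorial : ℝ) := by positivity
  simp only []
  set u := hval (m + 1) (x * √2) with hu
  set v := hval m (x * √2) with hv
  set ex := Real.exp (-x ^ 2 / 2) with hex
  have e1 : (2 : ℝ) ^ (((m + 1 : ℕ) : ℝ) / 2) * (n * v * √2) * ((2 : ℝ) ^ ((m : ℝ) / 2) * v)
      - (2 : ℝ) ^ ((m : ℝ) / 2) * ((x * √2 * v - u) * √2) * ((2 : ℝ) ^ (((m + 1 : ℕ) : ℝ) / 2) * u)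
      = 2 ^ (m + 1) * (n * v ^ 2 - x * √2 * v * u + u ^ 2) := by
    rw [← hpow]; ring
  have e2 : N ^ 2 / 2 * (a x ^ 2 + b x ^ 2) - N * x * (a x * b x)
      = n * (ex ^ 2 * (n * v ^ 2 - x * √2 * v * u + u ^ 2)) := by
    rw [hN2, hNs]
    simp only [ha, hb, ← hu, ← hv, ← hex]
    linear_combination (n * ex ^ 2 * v ^ 2 - √2 * x * ex ^ 2 * u * v) * hsn
  rw [e1, e2]
  field_simp
end

section
/- Let Kₙ(x,y) = e^{−(x²+y²)/2}/(2ⁿ·(n−1)!·√π) · ( Hₙ(x)·H_{n−1}(y) − H_{n−1}(x)·Hₙ(y) )/(x − y) for x ≠ y, extended smoothly across the diagonal (equivalently Kₙ(x,y) = Σ_{j=0}^{n−1} ηⱼ(x)ηⱼ(y) for the L²-normalized Hermite functions ηⱼ). For every ε > 0 and every integer k ≥ 0 there is a constant C (depending only on k and ε) such that for all n ≥ 1 and all (x,y) in the square R = [−(√2−ε)√n, (√2−ε)√n]²: (i) every mixed partial derivative of Kₙ of total order k satisfies |∂^k Kₙ(x,y)| ≤ C·n^{(1+k)/2}; and (ii)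 if additionally |x − y| ≥ n^{−1/2}, then |∂^k Kₙ(x,y)| ≤ C·n^{k/2}/|x − y|. -/
open Real

/-- ladder coefficient -/
noncomputable def rr (j : ℕ) : ℝ := Real.sqrt (2 * (j : ℝ))

lemma rr_sq (j : ℕ) : rr j ^ 2 = 2 * (j : ℝ) := by
  unfold rr; rw [Real.sq_sqrt (by positivity)]

lemma rr_nonneg (j : ℕ) : 0 ≤ rr j := Real.sqrt_nonneg _

lemma rr_zero : rr 0 = 0 := by simp [rr]

/-- Abstract properties of the normalized Hermite functions. -/
structure Herm (e : ℕ → ℝ → ℝ) : Prop where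
  smooth : ∀ j, ContDiff ℝ (⊤ : ℕ∞) (e j)
  up : ∀ j x, deriv (e j) x = x * e j x - rr (j + 1) * e (j + 1) x
  low : ∀ j x, deriv (e j) x = rr j * e (j - 1) x - x * e j x
  zero : (e 0 0) ^ 4 ≤ 1
  one : e 1 0 = 0

lemma hermite_deriv (j : ℕ) : Polynomial.derivative (Polynomial.hermite (j + 1)) =
    ((j : Polynomial ℤ) + 1) * Polynomial.hermite j := by
  induction j with
  | zero => simp [Polynomial.hermite_succ]
  | succ j ih =>
    rw [Polynomial.hermite_succ (j + 1), Polynomial.derivative_sub, Polynomial.derivative_mul, ih,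
      Polynomial.derivative_mul, Polynomial.hermite_succ j]
    simp
    ring

lemma herm_coef (j : ℕ) : (2 : ℝ) ^ ((j : ℝ) / 2) / Real.sqrt (2 ^ j * (j.factorial : ℝ) * Real.sqrt π)
    = 1 / Real.sqrt ((j.factorial : ℝ) * Real.sqrt π) := by
  have h : (2 : ℝ) ^ ((j : ℝ) / 2) = Real.sqrt (2 ^ j) := by
    rw [Real.sqrt_eq_rpow, ← Real.rpow_natCast, ← Real.rpow_mul (by norm_num)]
    congr 1; ring
  rw [h, mul_assoc, Real.sqrt_mul (by positivity)]
  have : Real.sqrt (2 ^ j) ≠ 0 := by positivity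
  have : Real.sqrt ((j.factorial : ℝ) * Real.sqrt π) ≠ 0 := by positivity
  field_simp

lemma herm_coef_succ (j : ℕ) : 1 / Real.sqrt ((j.factorial : ℝ) * Real.sqrt π) =
    Real.sqrt ((j : ℝ) + 1) / Real.sqrt (((j + 1).factorial : ℝ) * Real.sqrt π) := by
  rw [Nat.factorial_succ]; push_cast
  rw [mul_assoc, Real.sqrt_mul (x := (j : ℝ) + 1) (by positivity)]
  have : Real.sqrt ((j : ℝ) + 1) ≠ 0 := by positivity
  have : Real.sqrt ((j.factorial : ℝ) * Real.sqrt π) ≠ 0 := by positivity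
  field_simp

lemma rr_succ (j : ℕ) : rr (j + 1) = Real.sqrt 2 * Real.sqrt ((j : ℝ) + 1) := by
  unfold rr; push_cast; rw [Real.sqrt_mul (by norm_num)]

lemma herm_of (H : ℕ → ℝ → ℝ)
    (hH : ∀ m x, H m x = (2 : ℝ) ^ ((m : ℝ) / 2) *
      Polynomial.aeval (x * Real.sqrt 2) (Polynomial.hermite m))
    (η : ℕ → ℝ → ℝ)
    (hη : ∀ j x, η j x = H j x * Real.exp (-x ^ 2 / 2) /
      Real.sqrt (2 ^ j * (j.factorial : ℝ) * Real.sqrt π)) : Herm η := by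
  have he : ∀ j, η j = fun x => (1 / Real.sqrt ((j.factorial : ℝ) * Real.sqrt π)) *
      (Polynomial.aeval (x * Real.sqrt 2) (Polynomial.hermite j) * Real.exp (-x ^ 2 / 2)) := by
    intro j; funext x
    rw [hη, hH, ← herm_coef]; ring
  have hder : ∀ j x, HasDerivAt (η j) ((1 / Real.sqrt ((j.factorial : ℝ) * Real.sqrt π)) *
      ((Polynomial.aeval (x * Real.sqrt 2) (Polynomial.derivative (Polynomial.hermite j)) * Real.sqrt 2)
        * Real.exp (-x ^ 2 / 2) +
       Polynomial.aeval (x * Real.sqrt 2) (Polynomial.hermite j) * (Real.exp (-x ^ 2 / 2) * (-x)))) x := by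
    intro j x
    rw [he]
    refine HasDerivAt.const_mul _ (HasDerivAt.mul ?_ ?_)
    · have h1 := (Polynomial.hermite j).hasDerivAt_aeval (x * Real.sqrt 2)
      have h2 : HasDerivAt (fun x : ℝ => x * Real.sqrt 2) (Real.sqrt 2) x := by
        simpa using (hasDerivAt_id x).mul_const (Real.sqrt 2)
      exact h1.comp x h2
    · have h2 : HasDerivAt (fun x : ℝ => -x ^ 2 / 2) (-x) x := by
        have := ((hasDerivAt_pow 2 x).neg).div_const 2
        exact this.congr_deriv (by norm_num; ring)
      exact h2.exp
  have h2 : Real.sqrt 2 * Real.sqrt 2 = 2 := Real.mul_self_sqrt (by norm_num)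
  refine ⟨?_, ?_, ?_, ?_, ?_⟩
  · intro j
    rw [he]
    refine contDiff_const.mul (ContDiff.mul ?_ ?_)
    · have : (fun x : ℝ => Polynomial.aeval (x * Real.sqrt 2) (Polynomial.hermite j)) =
        (fun y : ℝ => Polynomial.aeval y (Polynomial.hermite j)) ∘ (fun x => x * Real.sqrt 2) := rfl
      rw [this]
      refine ((Polynomial.hermite j).contDiff_aeval _).comp (by fun_prop)
    · fun_prop
  · intro j x
    rw [(hder j x).deriv, he j, he (j + 1), Polynomial.hermite_succ, herm_coef_succ, rr_succ]
    simp only [map_sub, map_mul, Polynomial.aeval_X]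
    linear_combination (Real.sqrt ((j : ℝ) + 1) / Real.sqrt (((j + 1).factorial : ℝ) * Real.sqrt π)) *
      (-x * (Polynomial.aeval (x * Real.sqrt 2) (Polynomial.hermite j))) * (Real.exp (-x ^ 2 / 2)) * (-h2)
  · intro j x
    rw [(hder j x).deriv]
    rcases j with _ | j
    · rw [he 0]; simp [rr_zero]; ring
    · rw [hermite_deriv, Nat.add_sub_cancel, he j, he (j + 1), herm_coef_succ j, rr_succ]
      have h3 : Real.sqrt ((j : ℝ) + 1) * Real.sqrt ((j : ℝ) + 1) = j + 1 :=
        Real.mul_self_sqrt (by positivity)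
      simp only [map_mul, map_add, map_natCast, map_one]
      linear_combination (-1 / Real.sqrt (((j + 1).factorial : ℝ) * Real.sqrt π) * Real.sqrt 2 * 
        (Polynomial.aeval (x * Real.sqrt 2) (Polynomial.hermite j)) * (Real.exp (-x ^ 2 / 2))) * h3
  · rw [he]; simp
    have : 1 ≤ Real.sqrt (Real.sqrt π) := by
      rw [Real.one_le_sqrt, Real.one_le_sqrt]; linarith [Real.pi_gt_three]
    exact inv_le_one_of_one_le₀ (one_le_pow₀ this)
  · rw [he]; simp

lemma iter_x (f : ℝ → ℝ) (hf : ContDiff ℝ (⊤ : ℕ∞) f) (k : ℕ) (x : ℝ) :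
    iteratedDeriv k (fun x => x * f x) x = x * iteratedDeriv k f x + k * iteratedDeriv (k - 1) f x := by
  have hd : ∀ m, Differentiable ℝ (iteratedDeriv m f) := fun m =>
    hf.differentiable_iteratedDeriv m (by exact_mod_cast WithTop.coe_lt_top m)
  induction k generalizing x with
  | zero => simp
  | succ k ih =>
    rw [iteratedDeriv_succ, funext ih]
    have h1 : HasDerivAt (fun x => x * iteratedDeriv k f x + k * iteratedDeriv (k - 1) f x)
      ((1 * iteratedDeriv k f x + x * deriv (iteratedDeriv k f) x) +
        k * deriv (iteratedDeriv (k - 1) f) x) x :=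
      ((hasDerivAt_id x).mul (hd k x).hasDerivAt).add ((hd (k - 1) x).hasDerivAt.const_mul _)
    rw [h1.deriv]
    rcases k with _ | k
    · simp [iteratedDeriv_one]; ring
    · simp only [Nat.add_sub_cancel]
      rw [← iteratedDeriv_succ, ← iteratedDeriv_succ]
      push_cast; ring

namespace Herm
variable {e : ℕ → ℝ → ℝ}

lemma sm (h : Herm e) (j k : ℕ) (x : ℝ) : ContDiffAt ℝ k (e j) x :=
  ((h.smooth j).of_le (by exact_mod_cast le_top)).contDiffAt

lemma I2a (h : Herm e) (k j : ℕ) (x : ℝ) : iteratedDeriv (k + 1) (e j) x =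
    x * iteratedDeriv k (e j) x + k * iteratedDeriv (k - 1) (e j) x
      - rr (j + 1) * iteratedDeriv k (e (j + 1)) x := by
  rw [iteratedDeriv_succ', funext (h.up j)]
  rw [← iter_x _ (h.smooth j), ← iteratedDeriv_const_mul_field]
  exact iteratedDeriv_sub (f := fun x => x * e j x) (g := fun x => rr (j + 1) * e (j + 1) x)
    (contDiffAt_id.mul (h.sm j k x)) (contDiffAt_const.mul (h.sm _ k x))

lemma I4 (h : Herm e) (k j : ℕ) (x : ℝ) : iteratedDeriv (k + 1) (e j) x =
    rr j * iteratedDeriv k (e (j - 1)) x -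
    (x * iteratedDeriv k (e j) x + k * iteratedDeriv (k - 1) (e j) x) := by
  rw [iteratedDeriv_succ', funext (h.low j)]
  rw [← iter_x _ (h.smooth j), ← iteratedDeriv_const_mul_field]
  exact iteratedDeriv_sub (f := fun x => rr j * e (j - 1) x) (g := fun x => x * e j x)
    (contDiffAt_const.mul (h.sm _ k x)) (contDiffAt_id.mul (h.sm j k x))

lemma I3 (h : Herm e) (k j : ℕ) (x : ℝ) : iteratedDeriv (k + 2) (e j) x =
    x ^ 2 * iteratedDeriv k (e j) x + 2 * k * x * iteratedDeriv (k - 1) (e j) x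
    + k * (k - 1) * iteratedDeriv (k - 2) (e j) x - (2 * j + 1) * iteratedDeriv k (e j) x := by
  have h1 := h.I2a (k + 1) j x
  have h2 := h.I4 k (j + 1) x
  have h3 := h.I2a k j x
  have h4 := rr_sq (j + 1)
  simp only [Nat.add_sub_cancel] at h1 h2
  push_cast at h1 h4
  rcases k with _ | _ | k
  · simp only [Nat.cast_zero] at *
    simp only [zero_add] at *
    linear_combination h1 - rr (j + 1) * h2 + x * h3 - iteratedDeriv 0 (e j) x * h4
  · have h5 := h.I2a 0 j x
    simp at *
    linear_combination h1 - rr (j + 1) * h2 + x * h3 - deriv (e j) x * h4 + h5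
  · have h5 := h.I2a (k + 1) j x
    simp at *
    linear_combination h1 - rr (j + 1) * h2 + x * h3 - iteratedDeriv (k + 2) (e j) x * h4 + (k+2) * h5

lemma I1 (h : Herm e) (k j : ℕ) (x : ℝ) :
    2 * (x * iteratedDeriv k (e j) x + k * iteratedDeriv (k - 1) (e j) x) =
    rr j * iteratedDeriv k (e (j - 1)) x + rr (j + 1) * iteratedDeriv k (e (j + 1)) x := by
  linear_combination h.I4 k j x - h.I2a k j x

lemma I2 (h : Herm e) (k j : ℕ) (x : ℝ) :
    2 * iteratedDeriv (k + 1) (e j) x =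
    rr j * iteratedDeriv k (e (j - 1)) x - rr (j + 1) * iteratedDeriv k (e (j + 1)) x := by
  linear_combination h.I2a k j x + h.I4 k j x

lemma at_zero (h : Herm e) (m : ℕ) : ((m : ℝ) + 1) * (e m 0) ^ 4 ≤ 1 := by
  induction m using Nat.twoStepInduction with
  | zero => simpa using h.zero
  | one => simp [h.one]
  | more m ih _ =>
    have h1 := h.up (m + 1) 0
    have h2 := h.low (m + 1) 0
    rw [Nat.add_sub_cancel] at h2
    have h3 : rr (m + 2) * e (m + 2) 0 = - (rr (m + 1) * e m 0) := by
      have : m + 1 + 1 = m + 2 := rfl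
      rw [this] at h1
      linarith
    have h4 := rr_sq (m + 2)
    have h5 := rr_sq (m + 1)
    push_cast at h4 h5 ⊢
    have h6 : ((m : ℝ) + 2) * (e (m + 2) 0) ^ 2 = (m + 1) * (e m 0) ^ 2 := by
      have := congrArg (fun z => z ^ 2) h3
      simp only [neg_sq, mul_pow, h4, h5] at this
      linarith
    have h7 : ((m : ℝ) + 2) ^ 2 * (e (m + 2) 0) ^ 4 = (m + 1) ^ 2 * (e m 0) ^ 4 := by
      have := congrArg (fun z => z ^ 2) h6
      linear_combination this
    have hm : (0 : ℝ) ≤ m := Nat.cast_nonneg m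
    have h8 : ((m : ℝ) + 2) ^ 2 * (e (m + 2) 0) ^ 4 ≤ m + 1 := by
      rw [h7]; nlinarith
    have h9 : 0 ≤ (e (m + 2) 0) ^ 4 := by positivity
    by_contra hc
    push Not at hc
    nlinarith

lemma energy (h : Herm e) (n : ℕ) (x : ℝ) :
    (2 * n + 1 - x ^ 2) * (e n x) ^ 2 + (deriv (e n) x) ^ 2 ≤
    (2 * n + 1) * (e n 0) ^ 2 + (deriv (e n) 0) ^ 2 := by
  set E : ℝ → ℝ := fun x => (2 * n + 1 - x ^ 2) * (e n x) ^ 2 + (deriv (e n) x) ^ 2 with hE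
  have hE0 : (2 * n + 1) * (e n 0) ^ 2 + (deriv (e n) 0) ^ 2 = E 0 := by simp [hE]
  have hd : ∀ x, HasDerivAt E (-2 * x * (e n x) ^ 2) x := by
    intro x
    have h1 : HasDerivAt (e n) (deriv (e n) x) x :=
      ((h.smooth n).differentiable (by simp) x).hasDerivAt
    have h2 : HasDerivAt (deriv (e n)) ((x ^ 2 - (2 * n + 1)) * e n x) x := by
      have h3 := h.I3 0 n x
      simp at h3
      have h4 := (h.smooth n).differentiable_iteratedDeriv 1 (by exact_mod_cast WithTop.coe_lt_top 1)
      rw [iteratedDeriv_one] at h4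
      have h5 := (h4 x).hasDerivAt
      refine h5.congr_deriv ?_
      have h6 : iteratedDeriv 2 (e n) = deriv (deriv (e n)) := by
        rw [iteratedDeriv_succ, iteratedDeriv_one]
      rw [← h6, h3]; ring
    have h3 : HasDerivAt (fun x : ℝ => 2 * (n : ℝ) + 1 - x ^ 2) (-(2 * x)) x := by
      have := (hasDerivAt_pow 2 x).const_sub (2 * (n : ℝ) + 1)
      exact this.congr_deriv (by norm_num)
    have h4 := (h3.mul (h1.pow 2)).add (h2.pow 2)
    refine h4.congr_deriv ?_
    simp
    ring
  have hdiff : Differentiable ℝ E := fun x => (hd x).differentiableAt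
  rw [hE0]
  change E x ≤ E 0
  rcases le_total 0 x with hx | hx
  · refine (antitoneOn_of_deriv_nonpos (convex_Ici (0:ℝ)) hdiff.continuous.continuousOn
      hdiff.differentiableOn ?_) (Set.mem_Ici.2 le_rfl) hx hx
    intro y hy
    rw [interior_Ici] at hy
    have hy' : 0 < y := hy
    rw [(hd y).deriv]
    nlinarith [mul_nonneg hy'.le (sq_nonneg (e n y))]
  · refine (monotoneOn_of_deriv_nonneg (convex_Iic (0:ℝ)) hdiff.continuous.continuousOn
      hdiff.differentiableOn ?_) hx (Set.mem_Iic.2 le_rfl) hx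
    intro y hy
    rw [interior_Iic] at hy
    have hy' : y < 0 := hy
    rw [(hd y).deriv]
    nlinarith [mul_nonneg (neg_nonneg.2 hy'.le) (sq_nonneg (e n y))]

lemma energy_bound (h : Herm e) (n : ℕ) (hn : 1 ≤ n) (t : ℝ) (ht : 0 < t) (htn : t ^ 4 = n) (x : ℝ) :
    (2 * n + 1 - x ^ 2) * (e n x) ^ 2 + (deriv (e n) x) ^ 2 ≤ 5 * t ^ 2 := by
  refine (h.energy n x).trans ?_
  obtain ⟨m, rfl⟩ : ∃ m, n = m + 1 := ⟨n - 1, by omega⟩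
  rw [h.low]
  have h1 := h.at_zero (m + 1)
  have h2 := h.at_zero m
  have h3 := rr_sq (m + 1)
  have hn' : (1 : ℝ) ≤ ((m + 1 : ℕ) : ℝ) := by exact_mod_cast hn
  simp only [Nat.add_sub_cancel]
  have e2 : ((m : ℝ) + 1) = t ^ 4 := by rw [htn]; push_cast; rfl
  rw [e2] at h2
  rw [← htn] at h1 h3 hn' ⊢
  have h5 : t ^ 2 * (e m 0) ^ 2 ≤ 1 := by
    refine (sq_le_one_iff₀ (by positivity)).1 ?_
    calc _ = _ := by ring
      _ ≤ 1 := h2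
  have h6 : t ^ 2 * (e (m + 1) 0) ^ 2 ≤ 1 := by
    refine (sq_le_one_iff₀ (by positivity)).1 ?_
    nlinarith [show 0 ≤ (e (m + 1) 0) ^ 4 by positivity]
  have h7 : (rr (m + 1) * e m 0 - 0 * e (m + 1) 0) ^ 2 = 2 * t ^ 2 * (t ^ 2 * (e m 0) ^ 2) := by
    linear_combination (e m 0) ^ 2 * h3
  rw [h7]
  have h8 : (2 * t ^ 4 + 1) * e (m + 1) 0 ^ 2 ≤ 3 * t ^ 2 * (t ^ 2 * e (m + 1) 0 ^ 2) := by
    have : 0 ≤ e (m + 1) 0 ^ 2 := sq_nonneg _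
    nlinarith
  have ht2 : 0 < t ^ 2 := by positivity
  nlinarith

lemma dbound (h : Herm e) (c : ℝ) (hc : 0 < c) (k : ℕ) : ∃ C : ℝ, 0 ≤ C ∧ ∀ (n : ℕ) (t x : ℝ), 1 ≤ t →
    t ^ 4 = n → x ^ 2 ≤ (2 - c) * n → ∀ i ≤ k, t * |iteratedDeriv i (e n) x| ≤ C * t ^ (2 * i) := by
  have base : ∃ C : ℝ, 0 ≤ C ∧ ∀ (n : ℕ) (t x : ℝ), 1 ≤ t →
    t ^ 4 = n → x ^ 2 ≤ (2 - c) * n → ∀ i ≤ 1, t * |iteratedDeriv i (e n) x| ≤ C * t ^ (2 * i) := by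
    refine ⟨Real.sqrt (5 / c) + Real.sqrt 5, by positivity, ?_⟩
    intro n t x ht htn hx i hi
    have t0 : 0 < t := by linarith
    have hn : 1 ≤ n := by
      have : (1 : ℝ) ≤ n := by rw [← htn]; exact one_le_pow₀ ht
      exact_mod_cast this
    have h1 := h.energy_bound n hn t t0 htn x
    rw [← htn] at hx h1
    have t4 : 0 < t ^ 4 := by positivity
    interval_cases i
    · simp only [iteratedDeriv_zero, mul_zero, pow_zero, mul_one]
      have : t * |e n x| ≤ Real.sqrt (5 / c) := by
        apply Real.le_sqrt_of_sq_le
        rw [mul_pow, sq_abs, le_div_iff₀ hc]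
        have h2 : t ^ 2 * (t ^ 2 * e n x ^ 2 * c) ≤ t ^ 2 * 5 := by
          nlinarith [sq_nonneg (deriv (e n) x), sq_nonneg (e n x)]
        exact le_of_mul_le_mul_left h2 (by positivity)
      linarith [Real.sqrt_nonneg 5]
    · simp only [iteratedDeriv_one, mul_one]
      have : t * |deriv (e n) x| ≤ Real.sqrt 5 * t ^ 2 := by
        have h3 : |deriv (e n) x| ≤ Real.sqrt 5 * t := by
          apply abs_le_of_sq_le_sq _ (by positivity)
          rw [mul_pow, Real.sq_sqrt (by norm_num)]
          have : 0 ≤ (2 * t ^ 4 + 1 - x ^ 2) * e n x ^ 2 := by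
            apply mul_nonneg _ (sq_nonneg _)
            nlinarith
          linarith
        nlinarith
      have := mul_nonneg (Real.sqrt_nonneg (5 / c)) (sq_nonneg t)
      linarith
  induction k with
  | zero =>
    obtain ⟨C, h0, hC⟩ := base
    exact ⟨C, h0, fun n t x ht htn hx i hi => hC n t x ht htn hx i (by omega)⟩
  | succ k ih =>
    rcases k with _ | k
    · exact base
    obtain ⟨C, C0, hC⟩ := ih
    refine ⟨C + (5 * C + 4 * k * C + k * k * C), by positivity, ?_⟩
    intro n t x ht htn hx i hi
    have t0 : 0 < t := by linarith
    rcases Nat.lt_or_ge i (k + 2) with hlt | hge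
    · refine (hC n t x ht htn hx i (by omega)).trans ?_
      have : 0 ≤ (5 * C + 4 * k * C + k * k * C) := by positivity
      have : 0 ≤ (5 * C + 4 * k * C + k * k * C) * t ^ (2 * i) := by positivity
      linarith
    · have : i = k + 2 := by omega
      subst this
      have a1 := hC n t x ht htn hx k (by omega)
      have a2 := hC n t x ht htn hx (k - 1) (by omega)
      have a3 := hC n t x ht htn hx (k - 2) (by omega)
      have b2 : C * t ^ (2 * (k - 1)) ≤ C * t ^ (2 * k + 2) := by gcongr <;> first | exact ht | omega
      have b3 : C * t ^ (2 * (k - 2)) ≤ C * t ^ (2 * k + 4) := by gcongr <;> first | exact ht | omega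
      have t4 : 1 ≤ t ^ 4 := one_le_pow₀ ht
      rw [← htn] at hx
      have hx2 : |x| ≤ 2 * t ^ 2 := by
        apply abs_le_of_sq_le_sq _ (by positivity)
        nlinarith
      have hq : |x ^ 2 - (2 * n + 1)| ≤ 5 * t ^ 4 := by
        rw [← htn, abs_le]; constructor <;> nlinarith [sq_nonneg x]
      have hk : |(k : ℝ) * (k - 1)| ≤ k * k := by
        rcases k with _ | k
        · simp
        · rw [abs_of_nonneg (by push_cast; simp; positivity)]; push_cast; nlinarith [Nat.cast_nonneg (α := ℝ) k]
      have key : |iteratedDeriv (k + 2) (e n) x| ≤ |x ^ 2 - (2 * n + 1)| * |iteratedDeriv k (e n) x|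
          + 2 * k * |x| * |iteratedDeriv (k - 1) (e n) x|
          + |(k : ℝ) * (k - 1)| * |iteratedDeriv (k - 2) (e n) x| := by
        rw [h.I3 k n x, show x ^ 2 * iteratedDeriv k (e n) x + 2 * k * x * iteratedDeriv (k - 1) (e n) x
          + k * (k - 1) * iteratedDeriv (k - 2) (e n) x - (2 * n + 1) * iteratedDeriv k (e n) x =
          (x ^ 2 - (2 * n + 1)) * iteratedDeriv k (e n) x + 2 * k * x * iteratedDeriv (k - 1) (e n) x
          + k * (k - 1) * iteratedDeriv (k - 2) (e n) x by ring]
        refine (abs_add_three _ _ _).trans ?_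
        simp only [abs_mul, Nat.abs_cast, abs_two]
        exact le_rfl
      calc t * |iteratedDeriv (k + 2) (e n) x| ≤ t * (|x ^ 2 - (2 * n + 1)| * |iteratedDeriv k (e n) x|
          + 2 * k * |x| * |iteratedDeriv (k - 1) (e n) x|
          + |(k : ℝ) * (k - 1)| * |iteratedDeriv (k - 2) (e n) x|) := by gcongr
        _ = |x ^ 2 - (2 * n + 1)| * (t * |iteratedDeriv k (e n) x|)
          + 2 * k * |x| * (t * |iteratedDeriv (k - 1) (e n) x|)
          + |(k : ℝ) * (k - 1)| * (t * |iteratedDeriv (k - 2) (e n) x|) := by ring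
        _ ≤ (5 * t ^ 4) * (C * t ^ (2 * k)) + 2 * k * (2 * t ^ 2) * (C * t ^ (2 * k + 2))
          + (k * k) * (C * t ^ (2 * k + 4)) := by
            have a2' := a2.trans b2
            have a3' := a3.trans b3
            gcongr
        _ = (5 * C + 4 * k * C + k * k * C) * t ^ (2 * (k + 2)) := by ring
        _ ≤ _ := by
          have : 0 ≤ C * t ^ (2 * (k + 2)) := by positivity
          linarith

lemma dbound' (h : Herm e) (c : ℝ) (hc : 0 < c) (k : ℕ) : ∃ C : ℝ, 0 ≤ C ∧ ∀ (n : ℕ) (t x : ℝ), 1 ≤ t →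
    t ^ 4 = n → x ^ 2 ≤ (2 - c) * n → t * |iteratedDeriv k (e n) x| ≤ C * t ^ (2 * k) ∧
      t * |iteratedDeriv k (e (n - 1)) x| ≤ C * t ^ (2 * k) := by
  obtain ⟨C, C0, hC⟩ := h.dbound c hc (k + 1)
  refine ⟨3 * C + k * C, by positivity, ?_⟩
  intro n t x ht htn hx
  have t0 : 0 < t := by linarith
  have a1 := hC n t x ht htn hx k (by omega)
  have a2 := hC n t x ht htn hx (k - 1) (by omega)
  have a3 := hC n t x ht htn hx (k + 1) (by omega)
  have b2 : C * t ^ (2 * (k - 1)) ≤ C * t ^ (2 * k + 2) := by gcongr <;> first | exact ht | omega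
  constructor
  · refine a1.trans ?_
    have : 0 ≤ (2 * C + k * C) * t ^ (2 * k) := by positivity
    linarith
  · have h4 := h.I4 k n x
    have hr := rr_sq n
    have hr0 := rr_nonneg n
    rw [← htn] at hx hr
    have hr1 : t ^ 2 ≤ rr n := by
      apply le_of_sq_le_sq _ hr0
      rw [hr]; nlinarith [pow_pos t0 4]
    have t4 : 1 ≤ t ^ 4 := one_le_pow₀ ht
    have hx2 : |x| ≤ 2 * t ^ 2 := by
      apply abs_le_of_sq_le_sq _ (by positivity)
      nlinarith
    have key : rr n * |iteratedDeriv k (e (n - 1)) x| ≤ |iteratedDeriv (k + 1) (e n) x| +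
        |x| * |iteratedDeriv k (e n) x| + k * |iteratedDeriv (k - 1) (e n) x| := by
      rw [← abs_of_nonneg hr0, ← abs_mul, show rr n * iteratedDeriv k (e (n - 1)) x =
        iteratedDeriv (k + 1) (e n) x + x * iteratedDeriv k (e n) x + k * iteratedDeriv (k - 1) (e n) x by
          linarith]
      refine (abs_add_three _ _ _).trans ?_
      simp only [abs_mul, Nat.abs_cast]
      exact le_rfl
    have : t ^ 2 * (t * |iteratedDeriv k (e (n - 1)) x|) ≤ t ^ 2 * ((3 * C + k * C) * t ^ (2 * k)) := by
      calc t ^ 2 * (t * |iteratedDeriv k (e (n - 1)) x|) ≤ rr n * (t * |iteratedDeriv k (e (n - 1)) x|) := by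
            gcongr
        _ = t * (rr n * |iteratedDeriv k (e (n - 1)) x|) := by ring
        _ ≤ t * (|iteratedDeriv (k + 1) (e n) x| +
        |x| * |iteratedDeriv k (e n) x| + k * |iteratedDeriv (k - 1) (e n) x|) := by gcongr
        _ = t * |iteratedDeriv (k + 1) (e n) x| +
        |x| * (t * |iteratedDeriv k (e n) x|) + k * (t * |iteratedDeriv (k - 1) (e n) x|) := by ring
        _ ≤ C * t ^ (2 * (k + 1)) + 2 * t ^ 2 * (C * t ^ (2 * k)) + k * (C * t ^ (2 * k + 2)) := by
          have a2' := a2.trans b2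
          gcongr
        _ = _ := by ring
    exact le_of_mul_le_mul_left this (by positivity)

lemma diag (h : Herm e) (n : ℕ) (x : ℝ) : ∑ j ∈ Finset.range n, (e j x) ^ 2 =
    n * ((e (n - 1) x) ^ 2 + (e n x) ^ 2) - rr n * x * e n x * e (n - 1) x := by
  induction n with
  | zero => simp [rr_zero]
  | succ n ih =>
    rw [Finset.sum_range_succ, ih]
    have h1 := h.I1 0 n x
    simp only [iteratedDeriv_zero, Nat.cast_zero, zero_mul, add_zero] at h1
    have h2 := rr_sq n
    have h3 := rr_sq (n + 1)
    simp only [Nat.add_sub_cancel]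
    push_cast at h3 ⊢
    linear_combination (1 / 2) * (rr (n + 1) * e (n + 1) x - rr n * e (n - 1) x) * h1
      - (e (n - 1) x) ^ 2 / 2 * h2 + (e (n + 1) x) ^ 2 / 2 * h3

lemma sbound (h : Herm e) (c : ℝ) (hc : 0 < c) (k : ℕ) : ∃ C : ℝ, 0 ≤ C ∧ ∀ (n : ℕ) (t x : ℝ), 1 ≤ t →
    t ^ 4 = n → x ^ 2 ≤ (2 - c) * n →
    ∑ j ∈ Finset.range n, (iteratedDeriv k (e j) x) ^ 2 ≤ C * t ^ (4 * k + 2) := by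
  induction k with
  | zero =>
    obtain ⟨C, C0, hC⟩ := h.dbound' c hc 0
    refine ⟨6 * C ^ 2, by positivity, ?_⟩
    intro n t x ht htn hx
    obtain ⟨a1, a2⟩ := hC n t x ht htn hx
    simp only [iteratedDeriv_zero, mul_zero, pow_zero, mul_one, zero_add] at *
    rw [h.diag]
    have t0 : 0 < t := by linarith
    have hr := rr_sq n
    have hr0 := rr_nonneg n
    rw [← htn] at hx hr
    have t4 : 1 ≤ t ^ 4 := one_le_pow₀ ht
    have hx2 : |x| ≤ 2 * t ^ 2 := by
      apply abs_le_of_sq_le_sq _ (by positivity)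
      nlinarith
    have hr1 : rr n ≤ 2 * t ^ 2 := by
      apply le_of_sq_le_sq _ (by positivity)
      rw [hr]; nlinarith [pow_pos t0 4]
    have b1 : t ^ 2 * e n x ^ 2 ≤ C ^ 2 := by
      calc _ = (t * |e n x|) ^ 2 := by rw [mul_pow, sq_abs]
        _ ≤ C ^ 2 := by gcongr
    have b2 : t ^ 2 * e (n - 1) x ^ 2 ≤ C ^ 2 := by
      calc _ = (t * |e (n - 1) x|) ^ 2 := by rw [mul_pow, sq_abs]
        _ ≤ C ^ 2 := by gcongr
    have b3 : -(rr n * x * e n x * e (n - 1) x) ≤ 4 * t ^ 2 * C ^ 2 := by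
      calc -(rr n * x * e n x * e (n - 1) x) ≤ |rr n * x * e n x * e (n - 1) x| := neg_le_abs _
        _ = rr n * |x| * |e n x| * |e (n - 1) x| := by simp only [abs_mul, abs_of_nonneg hr0]
        _ ≤ (2 * t ^ 2) * (2 * t ^ 2) * |e n x| * |e (n - 1) x| := by gcongr
        _ = 4 * t ^ 2 * ((t * |e n x|) * (t * |e (n - 1) x|)) := by ring
        _ ≤ 4 * t ^ 2 * (C * C) := by gcongr
        _ = _ := by ring
    rw [← htn]
    have b4 : t ^ 4 * (e (n - 1) x ^ 2 + e n x ^ 2) ≤ t ^ 2 * (2 * C ^ 2) := by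
      calc _ = t ^ 2 * (t ^ 2 * e (n - 1) x ^ 2 + t ^ 2 * e n x ^ 2) := by ring
        _ ≤ _ := by gcongr; linarith
    linarith
  | succ k ih =>
    obtain ⟨C, C0, hC⟩ := ih
    obtain ⟨D, D0, hD⟩ := h.dbound' c hc k
    refine ⟨2 * C + D ^ 2, by positivity, ?_⟩
    intro n t x ht htn hx
    have a1 := hC n t x ht htn hx
    obtain ⟨a2, -⟩ := hD n t x ht htn hx
    have t0 : 0 < t := by linarith
    have step : ∀ j : ℕ, (iteratedDeriv (k + 1) (e j) x) ^ 2 ≤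
        j * (iteratedDeriv k (e (j - 1)) x) ^ 2 + (j + 1) * (iteratedDeriv k (e (j + 1)) x) ^ 2 := by
      intro j
      have h1 := h.I2 k j x
      have h2 := rr_sq j
      have h3 := rr_sq (j + 1)
      push_cast at h3
      have h4 := sq_nonneg (rr j * iteratedDeriv k (e (j - 1)) x +
        rr (j + 1) * iteratedDeriv k (e (j + 1)) x)
      have h5 : 4 * (iteratedDeriv (k + 1) (e j) x) ^ 2 = (rr j * iteratedDeriv k (e (j - 1)) x -
        rr (j + 1) * iteratedDeriv k (e (j + 1)) x) ^ 2 := by rw [← h1]; ring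
      have h6 : (rr j * iteratedDeriv k (e (j - 1)) x) ^ 2 = 2 * j * iteratedDeriv k (e (j - 1)) x ^ 2 := by
        rw [mul_pow, h2]
      have h7 : (rr (j + 1) * iteratedDeriv k (e (j + 1)) x) ^ 2 =
        2 * (j + 1) * iteratedDeriv k (e (j + 1)) x ^ 2 := by
        rw [mul_pow, h3]
      nlinarith
    set S := ∑ j ∈ Finset.range n, (iteratedDeriv k (e j) x) ^ 2 with hS
    have s1 : ∑ j ∈ Finset.range n, (j : ℝ) * (iteratedDeriv k (e (j - 1)) x) ^ 2 ≤ n * S := by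
      rcases n with _ | m
      · simp
      · rw [Finset.sum_range_succ', hS, Finset.sum_range_succ, mul_add, Finset.mul_sum]
        simp only [Nat.add_sub_cancel]
        have : ∑ j ∈ Finset.range m, ((j + 1 : ℕ) : ℝ) * (iteratedDeriv k (e j) x) ^ 2 ≤
          ∑ j ∈ Finset.range m, ((m + 1 : ℕ) : ℝ) * (iteratedDeriv k (e j) x) ^ 2 := by
          refine Finset.sum_le_sum fun j hj => ?_
          have := Finset.mem_range.1 hj
          gcongr
        have : 0 ≤ ((m + 1 : ℕ) : ℝ) * (iteratedDeriv k (e m) x) ^ 2 := by positivity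
        simp only [Nat.cast_zero, zero_mul, add_zero]
        linarith
    have s2 : ∑ j ∈ Finset.range n, ((j : ℝ) + 1) * (iteratedDeriv k (e (j + 1)) x) ^ 2 ≤
        n * (S + (iteratedDeriv k (e n) x) ^ 2) := by
      rw [hS, ← Finset.sum_range_succ (fun j => (iteratedDeriv k (e j) x) ^ 2),
        Finset.sum_range_succ', mul_add, Finset.mul_sum]
      have : ∑ j ∈ Finset.range n, ((j : ℝ) + 1) * (iteratedDeriv k (e (j + 1)) x) ^ 2 ≤
          ∑ j ∈ Finset.range n, (n : ℝ) * (iteratedDeriv k (e (j + 1)) x) ^ 2 := by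
        refine Finset.sum_le_sum fun j hj => ?_
        have h1 := Finset.mem_range.1 hj
        have h2 : (j : ℝ) + 1 ≤ n := by exact_mod_cast h1
        gcongr
      have : 0 ≤ (n : ℝ) * (iteratedDeriv k (e 0) x) ^ 2 := by positivity
      linarith
    have s3 : (iteratedDeriv k (e n) x) ^ 2 ≤ D ^ 2 * t ^ (4 * k + 2) := by
      calc (iteratedDeriv k (e n) x) ^ 2 = 1 * (|iteratedDeriv k (e n) x|) ^ 2 := by rw [sq_abs, one_mul]
        _ ≤ t ^ 2 * (|iteratedDeriv k (e n) x|) ^ 2 := by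
          gcongr; exact one_le_pow₀ ht
        _ = (t * |iteratedDeriv k (e n) x|) ^ 2 := by ring
        _ ≤ (D * t ^ (2 * k)) ^ 2 := by gcongr
        _ = D ^ 2 * t ^ (4 * k) := by ring
        _ ≤ D ^ 2 * t ^ (4 * k + 2) := by
          gcongr
          omega
    calc ∑ j ∈ Finset.range n, (iteratedDeriv (k + 1) (e j) x) ^ 2
        ≤ ∑ j ∈ Finset.range n, (j * (iteratedDeriv k (e (j - 1)) x) ^ 2 +
          (j + 1) * (iteratedDeriv k (e (j + 1)) x) ^ 2) := Finset.sum_le_sum fun j _ => step j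
      _ ≤ n * S + n * (S + (iteratedDeriv k (e n) x) ^ 2) := by
        rw [Finset.sum_add_distrib]; linarith
      _ = t ^ 4 * (2 * S + (iteratedDeriv k (e n) x) ^ 2) := by rw [htn]; ring
      _ ≤ t ^ 4 * (2 * (C * t ^ (4 * k + 2)) + D ^ 2 * t ^ (4 * k + 2)) := by gcongr
      _ = _ := by ring

/-- mixed derivative of the kernel -/
noncomputable def M (e : ℕ → ℝ → ℝ) (n k₁ k₂ : ℕ) (x y : ℝ) : ℝ :=
  ∑ j ∈ Finset.range n, iteratedDeriv k₁ (e j) x * iteratedDeriv k₂ (e j) y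

lemma Mbound (h : Herm e) (c : ℝ) (hc : 0 < c) (k₁ k₂ : ℕ) : ∃ C : ℝ, 0 ≤ C ∧
    ∀ (n : ℕ) (t x y : ℝ), 1 ≤ t →
    t ^ 4 = n → x ^ 2 ≤ (2 - c) * n → y ^ 2 ≤ (2 - c) * n →
    |M e n k₁ k₂ x y| ≤ C * t ^ (2 * (k₁ + k₂) + 2) := by
  obtain ⟨C, C0, hC⟩ := h.sbound c hc k₁
  obtain ⟨D, D0, hD⟩ := h.sbound c hc k₂
  refine ⟨Real.sqrt (C * D), by positivity, ?_⟩
  intro n t x y ht htn hx hy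
  have t0 : 0 < t := by linarith
  apply abs_le_of_sq_le_sq _ (by positivity)
  calc (M e n k₁ k₂ x y) ^ 2 ≤ _ := Finset.sum_mul_sq_le_sq_mul_sq _ _ _
    _ ≤ (C * t ^ (4 * k₁ + 2)) * (D * t ^ (4 * k₂ + 2)) := by
      gcongr
      · exact hC n t x ht htn hx
      · exact hD n t y ht htn hy
    _ = _ := by rw [mul_pow, Real.sq_sqrt (by positivity)]; ring

lemma CD (h : Herm e) (n k₁ k₂ : ℕ) (x y : ℝ) : 2 * (x - y) * M e n k₁ k₂ x y =
    rr n * (iteratedDeriv k₁ (e n) x * iteratedDeriv k₂ (e (n - 1)) y -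
      iteratedDeriv k₁ (e (n - 1)) x * iteratedDeriv k₂ (e n) y)
    - 2 * k₁ * M e n (k₁ - 1) k₂ x y + 2 * k₂ * M e n k₁ (k₂ - 1) x y := by
  unfold M
  induction n with
  | zero => simp [rr_zero]
  | succ n ih =>
    simp only [Finset.sum_range_succ, Nat.add_sub_cancel]
    linear_combination ih + iteratedDeriv k₂ (e n) y * h.I1 k₁ n x - iteratedDeriv k₁ (e n) x * h.I1 k₂ n y

lemma Mbound2 (h : Herm e) (c : ℝ) (hc : 0 < c) (k₁ k₂ : ℕ) : ∃ C : ℝ, 0 ≤ C ∧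
    ∀ (n : ℕ) (t x y : ℝ), 1 ≤ t →
    t ^ 4 = n → x ^ 2 ≤ (2 - c) * n → y ^ 2 ≤ (2 - c) * n →
    |M e n k₁ k₂ x y| * |x - y| ≤ C * t ^ (2 * (k₁ + k₂)) := by
  obtain ⟨A, A0, hA⟩ := h.dbound' c hc k₁
  obtain ⟨B, B0, hB⟩ := h.dbound' c hc k₂
  obtain ⟨C, C0, hC⟩ := h.Mbound c hc (k₁ - 1) k₂
  obtain ⟨D, D0, hD⟩ := h.Mbound c hc k₁ (k₂ - 1)
  refine ⟨2 * A * B + k₁ * C + k₂ * D, by positivity, ?_⟩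
  intro n t x y ht htn hx hy
  have t0 : 0 < t := by linarith
  have hr := rr_sq n
  have hr0 := rr_nonneg n
  obtain ⟨p1, p2⟩ := hA n t x ht htn hx
  obtain ⟨q1, q2⟩ := hB n t y ht htn hy
  have c1 : (k₁ : ℝ) * |M e n (k₁ - 1) k₂ x y| ≤ k₁ * C * t ^ (2 * (k₁ + k₂)) := by
    have := hC n t x y ht htn hx hy
    rcases k₁ with _ | k
    · simp
    · rw [mul_assoc]
      gcongr
      refine this.trans_eq ?_
      rw [Nat.add_sub_cancel]; congr 2; ring
  have c2 : (k₂ : ℝ) * |M e n k₁ (k₂ - 1) x y| ≤ k₂ * D * t ^ (2 * (k₁ + k₂)) := by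
    have := hD n t x y ht htn hx hy
    rcases k₂ with _ | k
    · simp
    · rw [mul_assoc]
      gcongr
      refine this.trans_eq ?_
      rw [Nat.add_sub_cancel]; congr 2
  rw [← htn] at hr
  have hr1 : rr n ≤ 2 * t ^ 2 := by
    apply le_of_sq_le_sq _ (by positivity)
    rw [hr]; nlinarith [pow_pos t0 4]
  have c3 : rr n * |iteratedDeriv k₁ (e n) x * iteratedDeriv k₂ (e (n - 1)) y -
      iteratedDeriv k₁ (e (n - 1)) x * iteratedDeriv k₂ (e n) y| ≤ 4 * A * B * t ^ (2 * (k₁ + k₂)) := by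
    calc _ ≤ (2 * t ^ 2) * (|iteratedDeriv k₁ (e n) x| * |iteratedDeriv k₂ (e (n - 1)) y| +
      |iteratedDeriv k₁ (e (n - 1)) x| * |iteratedDeriv k₂ (e n) y|) := by
          gcongr
          rw [← abs_mul, ← abs_mul]
          exact abs_sub _ _
      _ = 2 * ((t * |iteratedDeriv k₁ (e n) x|) * (t * |iteratedDeriv k₂ (e (n - 1)) y|) +
      (t * |iteratedDeriv k₁ (e (n - 1)) x|) * (t * |iteratedDeriv k₂ (e n) y|)) := by ring
      _ ≤ 2 * ((A * t ^ (2 * k₁)) * (B * t ^ (2 * k₂)) + (A * t ^ (2 * k₁)) * (B * t ^ (2 * k₂))) := by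
        have := mul_le_mul p1 q2 (by positivity) (by positivity)
        have := mul_le_mul p2 q1 (by positivity) (by positivity)
        linarith
      _ = _ := by ring
  have key : 2 * (|M e n k₁ k₂ x y| * |x - y|) ≤ rr n * |iteratedDeriv k₁ (e n) x * iteratedDeriv k₂ (e (n - 1)) y -
      iteratedDeriv k₁ (e (n - 1)) x * iteratedDeriv k₂ (e n) y| + 2 * (k₁ * |M e n (k₁ - 1) k₂ x y|) +
      2 * (k₂ * |M e n k₁ (k₂ - 1) x y|) := by
    have e1 : 2 * (|M e n k₁ k₂ x y| * |x - y|) = |2 * (x - y) * M e n k₁ k₂ x y| := by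
      simp only [abs_mul, abs_two]; ring
    rw [e1, h.CD, sub_eq_add_neg]
    refine (abs_add_three _ _ _).trans_eq ?_
    simp only [abs_neg, abs_mul, abs_two, Nat.abs_cast, abs_of_nonneg hr0]
    ring
  linarith

lemma M_eq (h : Herm e) (n k₁ k₂ : ℕ) (x y : ℝ) :
    iteratedDeriv k₁ (fun u => iteratedDeriv k₂ (fun v => ∑ j ∈ Finset.range n, e j u * e j v) y) x =
    M e n k₁ k₂ x y := by
  have h1 : (fun u => iteratedDeriv k₂ (fun v => ∑ j ∈ Finset.range n, e j u * e j v) y) =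
      fun u => ∑ j ∈ Finset.range n, iteratedDeriv k₂ (e j) y * e j u := by
    funext u
    rw [iteratedDeriv_fun_sum (fun j _ => contDiffAt_const.mul (h.sm j k₂ y))]
    refine Finset.sum_congr rfl fun j _ => ?_
    rw [iteratedDeriv_const_mul_field, mul_comm]
  rw [h1, iteratedDeriv_fun_sum (fun j _ => contDiffAt_const.mul (h.sm j k₁ x))]
  refine Finset.sum_congr rfl fun j _ => ?_
  rw [iteratedDeriv_const_mul_field, mul_comm]

end Herm

/-- **Derivative bounds for the GUE projection kernel.**  Let `η j` be the
`L²`-normalized Hermite functions (built from the physicists' Hermite polynomials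
`H j x = 2^{j/2} He_j (x√2)`) and `K n x y = Σ_{j<n} η j x · η j y` the GUE projection
kernel.  For every `ε > 0` and every `k` there is `C` such that for all `n ≥ 1` and all
`(x, y)` in the square `[-(√2-ε)√n, (√2-ε)√n]²`, every mixed partial derivative of
`K n` of total order `k` is bounded by `C n^{(1+k)/2}`, and by `C n^{k/2} / |x - y|`
when moreover `|x - y| ≥ n^{-1/2}`. -/
theorem GUE_kernel_derivative_bounds
    (H : ℕ → ℝ → ℝ)
    (hH : ∀ m x, H m x = (2 : ℝ) ^ ((m : ℝ) / 2) *
      Polynomial.aeval (x * Real.sqrt 2) (Polynomial.hermite m))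
    (η : ℕ → ℝ → ℝ)
    (hη : ∀ j x, η j x = H j x * Real.exp (-x ^ 2 / 2) /
      Real.sqrt (2 ^ j * (j.factorial : ℝ) * Real.sqrt π))
    (K : ℕ → ℝ → ℝ → ℝ)
    (hK : ∀ n x y, K n x y = ∑ j ∈ Finset.range n, η j x * η j y)
    (ε : ℝ) (hε : 0 < ε) (k : ℕ) :
    ∃ C : ℝ, ∀ n : ℕ, 1 ≤ n → ∀ x y : ℝ,
      x ∈ Set.Icc (-((Real.sqrt 2 - ε) * Real.sqrt n)) ((Real.sqrt 2 - ε) * Real.sqrt n) →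
      y ∈ Set.Icc (-((Real.sqrt 2 - ε) * Real.sqrt n)) ((Real.sqrt 2 - ε) * Real.sqrt n) →
      ∀ k₁ k₂ : ℕ, k₁ + k₂ = k →
      (|iteratedDeriv k₁ (fun u => iteratedDeriv k₂ (fun v => K n u v) y) x| ≤
          C * (n : ℝ) ^ ((1 + (k : ℝ)) / 2)) ∧
      ((n : ℝ) ^ (-(1 / 2 : ℝ)) ≤ |x - y| →
        |iteratedDeriv k₁ (fun u => iteratedDeriv k₂ (fun v => K n u v) y) x| ≤
          C * (n : ℝ) ^ ((k : ℝ) / 2) / |x - y|) := by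
  have h : Herm η := herm_of H hH η hη
  have hc : 0 < ε * Real.sqrt 2 := by positivity
  choose A A0 hA using fun k₁ k₂ => h.Mbound (ε * Real.sqrt 2) hc k₁ k₂
  choose B B0 hB using fun k₁ k₂ => h.Mbound2 (ε * Real.sqrt 2) hc k₁ k₂
  refine ⟨∑ p ∈ Finset.HasAntidiagonal.antidiagonal k, (A p.1 p.2 + B p.1 p.2), ?_⟩
  intro n hn x y hx hy k₁ k₂ hk
  have hle : A k₁ k₂ + B k₁ k₂ ≤ ∑ p ∈ Finset.HasAntidiagonal.antidiagonal k, (A p.1 p.2 + B p.1 p.2) :=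
    Finset.single_le_sum (f := fun p : ℕ × ℕ => A p.1 p.2 + B p.1 p.2)
      (fun p _ => add_nonneg (A0 _ _) (B0 _ _)) (Finset.HasAntidiagonal.mem_antidiagonal.2 hk : (k₁, k₂) ∈ _)
  have hn1 : (1 : ℝ) ≤ n := by exact_mod_cast hn
  have hn0 : (0 : ℝ) ≤ n := by linarith
  have hs1 : 1 ≤ Real.sqrt n := Real.one_le_sqrt.2 hn1
  have hsq : Real.sqrt n ^ 2 = n := Real.sq_sqrt hn0
  have h2 : Real.sqrt 2 ^ 2 = 2 := Real.sq_sqrt (by norm_num)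
  have bulk : ∀ z : ℝ, z ∈ Set.Icc (-((Real.sqrt 2 - ε) * Real.sqrt n)) ((Real.sqrt 2 - ε) * Real.sqrt n) →
      z ^ 2 ≤ (2 - ε * Real.sqrt 2) * n := by
    intro z hz
    have hab : |z| ≤ (Real.sqrt 2 - ε) * Real.sqrt n := abs_le.2 hz
    have hp : 0 ≤ Real.sqrt 2 - ε := by
      by_contra hneg
      push Not at hneg
      have := abs_nonneg z
      nlinarith
    have h3 : z ^ 2 ≤ ((Real.sqrt 2 - ε) * Real.sqrt n) ^ 2 := by
      rw [← sq_abs z]; gcongr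
    rw [mul_pow, hsq] at h3
    refine h3.trans ?_
    gcongr
    nlinarith
  set t := Real.sqrt (Real.sqrt n) with ht
  have ht1 : 1 ≤ t := Real.one_le_sqrt.2 hs1
  have ht2 : t ^ 2 = Real.sqrt n := Real.sq_sqrt (by positivity)
  have ht4 : t ^ 4 = n := by rw [← hsq, ← ht2]; ring
  have hpow : ∀ m : ℕ, (n : ℝ) ^ ((m : ℝ) / 2) = t ^ (2 * m) := by
    intro m
    rw [pow_mul, ht2, Real.sqrt_eq_rpow, ← Real.rpow_natCast, ← Real.rpow_mul hn0]
    congr 1; ring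
  have e1 : (n : ℝ) ^ ((1 + (k : ℝ)) / 2) = t ^ (2 * (k₁ + k₂) + 2) := by
    have := hpow (1 + k)
    push_cast at this
    rw [this, hk]; congr 1; ring
  have e2 : (n : ℝ) ^ ((k : ℝ) / 2) = t ^ (2 * (k₁ + k₂)) := by rw [hpow, hk]
  have hKe : iteratedDeriv k₁ (fun u => iteratedDeriv k₂ (fun v => K n u v) y) x =
      Herm.M η n k₁ k₂ x y := by
    rw [← h.M_eq]; simp only [hK]
  rw [hKe, e1, e2]
  have a := hA k₁ k₂ n t x y ht1 ht4 (bulk x hx) (bulk y hy)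
  have b := hB k₁ k₂ n t x y ht1 ht4 (bulk x hx) (bulk y hy)
  have A0' := A0 k₁ k₂
  have B0' := B0 k₁ k₂
  constructor
  · refine a.trans ?_
    gcongr
    linarith
  · intro hxy
    have hpos : 0 < |x - y| := lt_of_lt_of_le (Real.rpow_pos_of_pos (by linarith) _) hxy
    rw [le_div_iff₀ hpos]
    refine b.trans ?_
    gcongr
    linarith
end
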